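/- (q-analogue of Sheppard's transformation.) For every n ∈ ℕ and all nonzero complex numbers b, c, d, e: Σ_{k=0}^{n} (dq^k;q)_{n-k} (eq^k;q)_{n-k} · [(q^{-n};q)_k (b;q)_k (c;q)_k / (q;q)_k] · (d e q^n/(b c))^k = c^n · Σ_{k=0}^{n} q^{2k(n-1) - k(k-1)} · (d e/(b c²))^k · (d/c;q)_{n-k} (e/c;q)_{n-k} · [(q^{-n};q)_k (c;q)_k (b c q^{1-n}/(d e);q)_k / (q;q)_k] · q^k. -/

import Mathlib

open Finset Polynomial MeasureTheory Matrix
open scoped BigOperators ComplexOrder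

noncomputable section

/-- q-shifted factorial `(a;p)_n`. -/
def qp (a p : ℂ) (n : ℕ) : ℂ := ∏ j ∈ Finset.range n, (1 - a * p ^ j)

/-- q-Racah polynomial `R_n(μ(x);α,β,γ,δ;p)`. -/
def qRacah (p α β γ δ : ℂ) (n x : ℕ) : ℂ :=
  ∑ k ∈ Finset.range (min n x + 1),
    qp (p ^ (-(n : ℤ))) p k * qp (α * β * p ^ (n + 1)) p k *
        qp (p ^ (-(x : ℤ))) p k * qp (γ * δ * p ^ (x + 1)) p k /
      (qp (α * p) p k * qp (β * δ * p) p k * qp (γ * p) p k * qp p p k) * p ^ k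

/-- `IsUltra C` says that for each base `p`, parameter `β` and degree `n`, `C p β n` is
the continuous q-ultraspherical polynomial: it has degree at most `n` and its values at
`(z+z⁻¹)/2` are given by the symmetric Laurent sum. -/
def IsUltra (C : ℂ → ℂ → ℕ → Polynomial ℂ) : Prop :=
  ∀ (p β : ℂ) (n : ℕ),
    (C p β n).degree ≤ (n : ℕ) ∧
      ∀ z : ℂ, z ≠ 0 →
        (C p β n).eval ((z + z⁻¹) / 2) =
          ∑ r ∈ Finset.range (n + 1),
            qp β p r * qp β p (n - r) / (qp p p r * qp p p (n - r)) * z ^ ((n : ℤ) - 2 * r)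

/-- The matrix-valued polynomial `P_n` (entries in `Polynomial ℂ`); here `L = 2ℓ`. -/
def Pm (q : ℂ) (L : ℕ) (C : ℂ → ℂ → ℕ → Polynomial ℂ) (n : ℕ) :
    Matrix (Fin (L + 1)) (Fin (L + 1)) (Polynomial ℂ) :=
  Matrix.of fun i j =>
    ∑ k ∈ Finset.Icc (i : ℕ) (min L (n + (j : ℕ))),
      Polynomial.C
          ((-1 : ℂ) ^ k *
            q ^ ((n : ℤ) + (2 * (k : ℤ) + 1) * ((k : ℤ) - ((i : ℕ) : ℤ)) +
                ((j : ℕ) : ℤ) * (2 * (k : ℤ) + 1) + 2 * (k : ℤ) * ((L : ℤ) + (n : ℤ) + 1) -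
                (k : ℤ) ^ 2) *
            (qp (q ^ 2) (q ^ 2) k * qp (q ^ 2) (q ^ 2) (k + (i : ℕ)) /
              (qp (q ^ 2) (q ^ 2) (2 * k) * qp (q ^ 2) (q ^ 2) (i : ℕ))) *
            (qp (q ^ (-(2 * (L : ℤ)))) (q ^ 2) k *
                qp (q ^ (-(2 * ((j : ℕ) : ℤ) + 2 * (n : ℤ)))) (q ^ 2) k /
              (qp (q ^ 2) (q ^ 2) k * qp (q ^ (2 * (L : ℤ) + 4)) (q ^ 2) k)) *
            (qp (q ^ 2) (q ^ 2) (n + (j : ℕ) - k) /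
              qp (q ^ (4 * (k : ℤ) + 4)) (q ^ 2) (n + (j : ℕ) - k)) *
            qRacah (q ^ 2) 1 1 (q ^ (-(2 * (n : ℤ) + 2 * ((j : ℕ) : ℤ) + 2)))
              (q ^ (-(2 * (L : ℤ) + 2))) k (j : ℕ)) *
        (C (q ^ 2) (q ^ (-(2 * (k : ℤ)))) (k - (i : ℕ)) *
          C (q ^ 2) (q ^ (2 * (k : ℤ) + 2)) (n + (j : ℕ) - k))

/-- Evaluation of the matrix-valued polynomial `P_n` at a point. -/
def evP (q : ℂ) (L : ℕ) (C : ℂ → ℂ → ℕ → Polynomial ℂ) (n : ℕ) (x : ℂ) :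
    Matrix (Fin (L + 1)) (Fin (L + 1)) ℂ :=
  (Pm q L C n).map (Polynomial.eval x)

/-- The coefficients `α_t(m,n)` of the weight. -/
def alphaC (q : ℂ) (L m n t : ℕ) : ℂ :=
  q ^ (2 * (n : ℤ) * ((L : ℤ) + 1) - (n : ℤ) ^ 2 - (2 * (L : ℤ) + 3) * (t : ℤ) + (t : ℤ) ^ 2 -
      (L : ℤ) + (m : ℤ)) *
    ((1 - q ^ (2 * (L : ℤ) + 2)) / (1 - q ^ (2 * (m : ℤ) + 2))) *
    (qp (q ^ 2) (q ^ 2) (L - n) * qp (q ^ 2) (q ^ 2) n / qp (q ^ 2) (q ^ 2) L) *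
    ((-1 : ℂ) ^ ((m : ℤ) - (t : ℤ)) * qp (q ^ (2 * (m : ℤ) - 2 * (L : ℤ))) (q ^ 2) (n - t) /
      qp (q ^ (2 * (m : ℤ) + 4)) (q ^ 2) (n - t)) *
    (qp (q ^ (2 * (L : ℤ) + 4 - 2 * (t : ℤ))) (q ^ 2) t / qp (q ^ 2) (q ^ 2) t)

/-- The matrix weight `W(x)`. -/
def Wm (q : ℂ) (L : ℕ) (x : ℂ) : Matrix (Fin (L + 1)) (Fin (L + 1)) ℂ :=
  Matrix.of fun i j =>
    ∑ t ∈ Finset.range (max (i : ℕ) (j : ℕ) + 1),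
      alphaC q L (min (i : ℕ) (j : ℕ)) (max (i : ℕ) (j : ℕ)) t *
        (Polynomial.Chebyshev.U ℂ
            ((min (i : ℕ) (j : ℕ) : ℤ) + (max (i : ℕ) (j : ℕ) : ℤ) - 2 * (t : ℤ))).eval x

/-- The antidiagonal involution `J`. -/
def Jm (L : ℕ) : Matrix (Fin (L + 1)) (Fin (L + 1)) ℂ :=
  Matrix.of fun i j => if (i : ℕ) + (j : ℕ) = L then 1 else 0

/-- The diagonal leading-coefficient matrix `Γ_n`. -/
def Gam (q : ℂ) (L n : ℕ) : Matrix (Fin (L + 1)) (Fin (L + 1)) ℂ :=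
  Matrix.diagonal fun i =>
    2 ^ n * q ^ n * qp (q ^ (2 * ((i : ℕ) : ℤ) + 2)) (q ^ 2) n *
        qp (q ^ (2 * (L : ℤ) - 2 * ((i : ℕ) : ℤ) + 2)) (q ^ 2) n /
      (qp (q ^ 2) (q ^ 2) n * qp (q ^ (2 * (L : ℤ) + 4)) (q ^ 2) n)

/-- The squared-norm matrix `G_m`. -/
def Gmat (q : ℂ) (L m : ℕ) : Matrix (Fin (L + 1)) (Fin (L + 1)) ℂ :=
  Matrix.diagonal fun i =>
    q ^ (2 * (m : ℤ) - (L : ℤ)) * (1 - q ^ (2 * (L : ℤ) + 2)) ^ 2 /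
      ((1 - q ^ (2 * (m : ℤ) + 2 * ((i : ℕ) : ℤ) + 2)) *
        (1 - q ^ (2 * (L : ℤ) - 2 * ((i : ℕ) : ℤ) + 2 * (m : ℤ) + 2)))

/-- The unipotent lower triangular matrix `L(x)` of the LDU decomposition. -/
def Lm (q : ℂ) (L : ℕ) (C : ℂ → ℂ → ℕ → Polynomial ℂ) (x : ℂ) :
    Matrix (Fin (L + 1)) (Fin (L + 1)) ℂ :=
  Matrix.of fun m k =>
    if (k : ℕ) ≤ (m : ℕ) then
      q ^ (((m : ℕ) : ℤ) - ((k : ℕ) : ℤ)) * qp (q ^ 2) (q ^ 2) (m : ℕ) *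
          qp (q ^ 2) (q ^ 2) (2 * (k : ℕ) + 1) /
          (qp (q ^ 2) (q ^ 2) ((m : ℕ) + (k : ℕ) + 1) * qp (q ^ 2) (q ^ 2) (k : ℕ)) *
        (C (q ^ 2) (q ^ (2 * (k : ℕ) + 2)) ((m : ℕ) - (k : ℕ))).eval x
    else 0

/-- The claimed inverse of `L(x)`. -/
def Linv (q : ℂ) (L : ℕ) (C : ℂ → ℂ → ℕ → Polynomial ℂ) (x : ℂ) :
    Matrix (Fin (L + 1)) (Fin (L + 1)) ℂ :=
  Matrix.of fun k n =>
    if (n : ℕ) ≤ (k : ℕ) then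
      q ^ ((2 * ((k : ℕ) : ℤ) + 1) * (((k : ℕ) : ℤ) - ((n : ℕ) : ℤ))) *
          qp (q ^ 2) (q ^ 2) (k : ℕ) * qp (q ^ 2) (q ^ 2) ((k : ℕ) + (n : ℕ)) /
          (qp (q ^ 2) (q ^ 2) (2 * (k : ℕ)) * qp (q ^ 2) (q ^ 2) (n : ℕ)) *
        (C (q ^ 2) (q ^ (-(2 * ((k : ℕ) : ℤ)))) ((k : ℕ) - (n : ℕ))).eval x
    else 0

/-- The constants `c_k(ℓ)`. -/
def ckC (q : ℂ) (L k : ℕ) : ℂ :=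
  q ^ (-(L : ℤ)) / 4 * (1 - q ^ (4 * k + 2)) * qp (q ^ 2) (q ^ 2) (L + k + 1) *
      qp (q ^ 2) (q ^ 2) (L - k) * qp (q ^ 2) (q ^ 2) k ^ 4 /
    (qp (q ^ 2) (q ^ 2) (2 * k + 1) ^ 2 * qp (q ^ 2) (q ^ 2) L ^ 2)

/-- The diagonal part `T(x)` of the LDU decomposition. -/
def Tm (q : ℂ) (L : ℕ) (x : ℂ) : Matrix (Fin (L + 1)) (Fin (L + 1)) ℂ :=
  Matrix.diagonal fun k =>
    ckC q L (k : ℕ) *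
      (4 * ∏ j ∈ Finset.Icc 1 (k : ℕ), (1 - 2 * (2 * x ^ 2 - 1) * q ^ (2 * j) + q ^ (4 * j)))

/-- The coefficient matrix `M₁(z)` of the q-difference operator `D₁`. -/
def M1f (q : ℂ) (L : ℕ) (z : ℂ) : Matrix (Fin (L + 1)) (Fin (L + 1)) ℂ :=
  Matrix.of fun i j =>
    if (j : ℕ) = (i : ℕ) + 1 then
      -(q ^ (1 - ((i : ℕ) : ℤ)) * (1 - q ^ (2 * (i : ℕ) + 2)) / (1 - q ^ 2) ^ 2 *
        (z / (1 - z ^ 2)))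
    else if (j : ℕ) = (i : ℕ) then
      q ^ (1 - ((i : ℕ) : ℤ)) / (1 - q ^ 2) ^ 2 *
        ((1 - q ^ (2 * (i : ℕ) + 2) * z ^ 2) / (1 - z ^ 2))
    else 0

/-- `M₂(z) = J M₁(z) J`. -/
def M2f (q : ℂ) (L : ℕ) (z : ℂ) : Matrix (Fin (L + 1)) (Fin (L + 1)) ℂ :=
  Jm L * M1f q L z * Jm L

/-- The eigenvalue matrix `Λ_n(1)`. -/
def Lam1 (q : ℂ) (L n : ℕ) : Matrix (Fin (L + 1)) (Fin (L + 1)) ℂ :=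
  Matrix.diagonal fun j =>
    (q ^ (-((j : ℕ) : ℤ) - (n : ℤ) - 1) + q ^ (((j : ℕ) : ℤ) + (n : ℤ) + 1)) / (q⁻¹ - q) ^ 2

/-- The eigenvalue matrix `Λ_n(2) = J Λ_n(1) J`. -/
def Lam2 (q : ℂ) (L n : ℕ) : Matrix (Fin (L + 1)) (Fin (L + 1)) ℂ :=
  Jm L * Lam1 q L n * Jm L

/-- The diagonal coefficient matrix `K₁(z)` of the decoupled operator. -/
def K1f (q : ℂ) (L : ℕ) (z : ℂ) : Matrix (Fin (L + 1)) (Fin (L + 1)) ℂ :=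
  Matrix.diagonal fun i =>
    q ^ (1 - ((i : ℕ) : ℤ)) / (1 - q ^ 2) ^ 2 *
      ((1 - q ^ (2 * (i : ℕ) + 2) * z ^ 2) / (1 - z ^ 2))

/-- The symmetric Laurent polynomial `Ĉ_k(z;β|p)`. -/
def Chat (p β : ℂ) (k : ℕ) (z : ℂ) : ℂ :=
  ∑ r ∈ Finset.range (k + 1),
    qp β p r * qp β p (k - r) / (qp p p r * qp p p (k - r)) * z ^ ((k : ℤ) - 2 * (r : ℤ))

/-- The matrix polynomials `R_n(x) = L(x)ᵀ P_n(x) Γ_n⁻¹`. -/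
def Rmat (q : ℂ) (L : ℕ) (C : ℂ → ℂ → ℕ → Polynomial ℂ) (n : ℕ) (x : ℂ) :
    Matrix (Fin (L + 1)) (Fin (L + 1)) ℂ :=
  (Lm q L C x)ᵀ * evP q L C n x * (Gam q L n)⁻¹


def zN (p : ℂ) (n k : ℕ) : ℂ := ∏ j ∈ Finset.range k, (1 - p ^ (n - j))

def zg (p : ℂ) (n k : ℕ) : ℂ := zN p n k / qp p p k

def zW (p : ℂ) (k : ℕ) : ℂ := ∏ j ∈ Finset.range k, (-p ^ j)

def zP (p x f : ℂ) (k : ℕ) : ℂ := ∏ j ∈ Finset.range k, (x - f * p ^ j)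

def zA (p c s f : ℂ) (k : ℕ) : ℂ := ∏ j ∈ Finset.range k, (c - s * p ^ j + f * p ^ (2 * j))

lemma qp_zero' (a p : ℂ) : qp a p 0 = 1 := by simp [qp]

lemma qp_succ' (a p : ℂ) (n : ℕ) : qp a p (n + 1) = qp a p n * (1 - a * p ^ n) := by
  simp [qp, Finset.prod_range_succ]

lemma qp_succ_left (a p : ℂ) (n : ℕ) : qp a p (n + 1) = (1 - a) * qp (a * p) p n := by
  simp only [qp, Finset.prod_range_succ', pow_zero, mul_one]
  rw [mul_comm]
  congr 1
  exact Finset.prod_congr rfl fun j _ => by ring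

lemma zP_succ_left (p x f : ℂ) (k : ℕ) : zP p x f (k + 1) = (x - f) * zP p x (f * p) k := by
  simp only [zP, Finset.prod_range_succ', pow_zero, mul_one]
  rw [mul_comm]
  congr 1
  exact Finset.prod_congr rfl fun j _ => by ring

lemma zA_shift (p c s f : ℂ) (k : ℕ) :
    zA p (c * p) (s * p) (f * p) k = p ^ k * zA p c s f k := by
  induction k with
  | zero => simp [zA]
  | succ k ih =>
    simp only [zA, Finset.prod_range_succ] at ih ⊢
    rw [ih]; ring

lemma zA_succ (p c s f : ℂ) (k : ℕ) :
    zA p c s f (k + 1) = zA p c s f k * (c - s * p ^ k + f * p ^ (2 * k)) := by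
  simp [zA, Finset.prod_range_succ]

lemma zW_succ (p : ℂ) (k : ℕ) : zW p (k + 1) = zW p k * (-p ^ k) := by
  simp [zW, Finset.prod_range_succ]

lemma zg_zero (p : ℂ) (n : ℕ) : zg p n 0 = 1 := by simp [zg, zN, qp]

lemma zg_over (p : ℂ) (n : ℕ) : zg p n (n + 1) = 0 := by
  simp [zg, zN, Finset.prod_range_succ]

lemma qpp_ne (p : ℂ) (hp : ∀ j : ℕ, 1 - p ^ (j + 1) ≠ 0) (k : ℕ) : qp p p k ≠ 0 := by
  unfold qp
  refine Finset.prod_ne_zero_iff.2 fun j _ => ?_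
  rw [← pow_succ']; exact hp j

lemma zg_right (p : ℂ) (hp : ∀ j : ℕ, 1 - p ^ (j + 1) ≠ 0) (n k : ℕ) :
    zg p n (k + 1) * (1 - p ^ (k + 1)) = zg p n k * (1 - p ^ (n - k)) := by
  have h1 := qpp_ne p hp k
  have h2 := hp k
  have h3 : 1 - p * p ^ k ≠ 0 := by rw [← pow_succ']; exact h2
  unfold zg
  rw [qp_succ']
  simp only [zN, Finset.prod_range_succ]
  rw [pow_succ']
  field_simp

lemma zg_diag (p : ℂ) (hp : ∀ j : ℕ, 1 - p ^ (j + 1) ≠ 0) (n k : ℕ) :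
    zg p (n + 1) (k + 1) * (1 - p ^ (k + 1)) = zg p n k * (1 - p ^ (n + 1)) := by
  have h1 := qpp_ne p hp k
  have h2 := hp k
  have h3 : 1 - p * p ^ k ≠ 0 := by rw [← pow_succ']; exact h2
  unfold zg
  rw [qp_succ']
  simp only [zN, Finset.prod_range_succ', Nat.add_sub_add_right, Nat.sub_zero]
  rw [pow_succ' p k]
  field_simp

lemma pascal1 (p : ℂ) (hp : ∀ j : ℕ, 1 - p ^ (j + 1) ≠ 0) (n k : ℕ) (h : k ≤ n) :
    zg p (n + 1) (k + 1) = zg p n (k + 1) + p ^ (n - k) * zg p n k := by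
  apply mul_right_cancel₀ (hp k)
  obtain ⟨m, rfl⟩ := Nat.exists_eq_add_of_le h
  rw [zg_diag p hp, add_mul, zg_right p hp, Nat.add_sub_cancel_left]
  ring

lemma pascal2 (p : ℂ) (hp : ∀ j : ℕ, 1 - p ^ (j + 1) ≠ 0) (n k : ℕ) (h : k ≤ n) :
    zg p (n + 1) (k + 1) = p ^ (k + 1) * zg p n (k + 1) + zg p n k := by
  apply mul_right_cancel₀ (hp k)
  obtain ⟨m, rfl⟩ := Nat.exists_eq_add_of_le h
  rw [zg_diag p hp, add_mul, mul_assoc, zg_right p hp, Nat.add_sub_cancel_left]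
  ring

lemma sum_split (n : ℕ) (T U V : ℕ → ℂ) (h0 : T 0 = U 0) (hU : U (n + 1) = 0)
    (h : ∀ k ≤ n, T (k + 1) = U (k + 1) + V k) :
    ∑ k ∈ Finset.range (n + 2), T k =
      ∑ k ∈ Finset.range (n + 1), U k + ∑ k ∈ Finset.range (n + 1), V k := by
  have : ∑ k ∈ Finset.range (n + 1), U k = ∑ k ∈ Finset.range (n + 2), U k := by
    rw [Finset.sum_range_succ _ (n + 1), hU, add_zero]
  rw [this, Finset.sum_range_succ' T, Finset.sum_range_succ' U, h0,
    Finset.sum_congr rfl fun k hk => h k (Nat.lt_succ_iff.1 (Finset.mem_range.1 hk)),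
    Finset.sum_add_distrib]
  ring

def zL (p : ℂ) (n : ℕ) (c d e x f : ℂ) : ℂ :=
  ∑ k ∈ Finset.range (n + 1), zg p n k * zW p k * qp c p k * zP p x f k *
    qp (d * p ^ k) p (n - k) * qp (e * p ^ k) p (n - k)

def zR (p : ℂ) (n : ℕ) (c s x f : ℂ) : ℂ :=
  ∑ k ∈ Finset.range (n + 1), zg p n k * qp c p k * zA p c s f (n - k) *
    qp (x * p ^ (n - k)) p k

lemma zL_succ (p : ℂ) (hp : ∀ j : ℕ, 1 - p ^ (j + 1) ≠ 0) (n : ℕ) (c d e x f : ℂ) :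
    zL p (n + 1) c d e x f = (1 - d * p ^ n) * (1 - e * p ^ n) * zL p n c d e x f +
      p ^ n * (f - x) * (1 - c) * zL p n (c * p) (d * p) (e * p) x (f * p) := by
  unfold zL
  rw [Finset.mul_sum, Finset.mul_sum]
  apply sum_split
  · simp only [zg_zero, pow_zero, mul_one, Nat.sub_zero, qp_succ']
    ring
  · rw [zg_over]; ring
  · intro k hk
    obtain ⟨m, rfl⟩ := Nat.exists_eq_add_of_le hk
    rw [pascal1 p hp _ _ hk, zW_succ, zP_succ_left]
    rw [show k + m + 1 - (k + 1) = m by omega, show k + m - k = m by omega]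
    have key : zg p (k + m) (k + 1) * qp (d * p ^ (k + 1)) p m * qp (e * p ^ (k + 1)) p m =
        zg p (k + m) (k + 1) * ((1 - d * p ^ (k + m)) * (1 - e * p ^ (k + m)) *
          qp (d * p ^ (k + 1)) p (k + m - (k + 1)) * qp (e * p ^ (k + 1)) p (k + m - (k + 1))) := by
      rcases m with _ | m
      · rw [Nat.add_zero, zg_over]; ring
      · rw [show k + (m + 1) - (k + 1) = m by omega, qp_succ', qp_succ']
        ring
    rw [qp_succ_left c]
    rw [show d * p * p ^ k = d * p ^ (k + 1) by ring, show e * p * p ^ k = e * p ^ (k + 1) by ring]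
    linear_combination zW p k * (-p ^ k) * ((1 - c) * qp (c * p) p k) *
      ((x - f) * zP p x (f * p) k) * key

lemma zR_succ (p : ℂ) (hp : ∀ j : ℕ, 1 - p ^ (j + 1) ≠ 0) (n : ℕ) (c d e x f : ℂ)
    (hf : f * c = d * e) :
    zR p (n + 1) c (d + e) x f = (1 - d * p ^ n) * (1 - e * p ^ n) * zR p n c (d + e) x f +
      p ^ n * (f - x) * (1 - c) * zR p n (c * p) ((d + e) * p) x (f * p) := by
  have e1 : zR p (n + 1) c (d + e) x f =
      ∑ k ∈ Finset.range (n + 1), p ^ k * zg p n k * qp c p k * zA p c (d + e) f (n - k + 1) *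
          qp (x * p ^ (n - k)) p k +
      ∑ k ∈ Finset.range (n + 1), zg p n k * qp c p (k + 1) * zA p c (d + e) f (n - k) *
          ((1 - x * p ^ (2 * (n - k) + k)) * qp (x * p ^ (n - k)) p k) := by
    unfold zR
    apply sum_split
    · simp only [zg_zero, pow_zero, mul_one, Nat.sub_zero, qp_zero']
    · rw [zg_over]; ring
    · intro k hk
      obtain ⟨m, rfl⟩ := Nat.exists_eq_add_of_le hk
      rw [show k + m + 1 - (k + 1) = m by omega, show k + m - k = m by omega]
      rcases m with _ | m
      · have h2 := pascal2 p hp k k le_rfl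
        simp only [Nat.add_zero, zg_over] at h2 ⊢
        rw [h2, qp_succ' (x * p ^ 0)]
        ring
      · have h1 := pascal1 p hp _ _ hk
        have h2 := pascal2 p hp _ _ hk
        rw [show k + (m + 1) - k = m + 1 by omega] at h1
        rw [show k + (m + 1) - (k + 1) = m by omega]
        rw [qp_succ' (x * p ^ (m + 1)), qp_succ_left (x * p ^ m),
          show x * p ^ m * p = x * p ^ (m + 1) by ring]
        linear_combination qp c p (k + 1) * zA p c (d + e) f (m + 1) *
          qp (x * p ^ (m + 1)) p k * (h2 - x * p ^ (m + 1 + k) * h1)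
  rw [e1]
  unfold zR
  rw [Finset.mul_sum, Finset.mul_sum, ← Finset.sum_add_distrib, ← Finset.sum_add_distrib]
  refine Finset.sum_congr rfl fun k hk => ?_
  have hk := Nat.lt_succ_iff.1 (Finset.mem_range.1 hk)
  obtain ⟨m, rfl⟩ := Nat.exists_eq_add_of_le hk
  rw [show k + m - k = m by omega, zA_shift, zA_succ]
  have h3 : (1 - c) * qp (c * p) p k = qp c p k * (1 - c * p ^ k) := by
    rw [← qp_succ_left, qp_succ']
  rw [qp_succ']
  linear_combination (-(p ^ (k + m) * (f - x) * zg p (k + m) k * (p ^ m * zA p c (d + e) f m) *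
    qp (x * p ^ m) p k)) * h3 + zg p (k + m) k * zA p c (d + e) f m * qp (x * p ^ m) p k *
      qp c p k * p ^ (2 * (k + m)) * hf

lemma zL_eq_zR (p : ℂ) (hp : ∀ j : ℕ, 1 - p ^ (j + 1) ≠ 0) (n : ℕ) :
    ∀ (c d e x f : ℂ), f * c = d * e → zL p n c d e x f = zR p n c (d + e) x f := by
  induction n with
  | zero =>
    intro c d e x f _
    simp [zL, zR, zg, zN, zW, zP, zA, qp]
  | succ n ih =>
    intro c d e x f hf
    rw [zL_succ p hp, zR_succ p hp n c d e x f hf, ih c d e x f hf,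
      ih (c * p) (d * p) (e * p) x (f * p) (by linear_combination p ^ 2 * hf), add_mul d e p]

lemma zP_eq (p x b : ℂ) (k : ℕ) : zP p x (x * b) k = x ^ k * qp b p k := by
  induction k with
  | zero => simp [zP, qp]
  | succ k ih =>
    rw [qp_succ', zP, Finset.prod_range_succ, ← zP, ih]; ring

lemma zA_eq (p c d e : ℂ) (hc : c ≠ 0) (k : ℕ) :
    zA p c (d + e) (d * e / c) k = c ^ k * (qp (d / c) p k * qp (e / c) p k) := by
  induction k with
  | zero => simp [zA, qp]
  | succ k ih =>
    rw [qp_succ', qp_succ', zA_succ, ih]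
    field_simp
    ring

lemma conn1 (p : ℂ) (h0 : p ≠ 0) (n k : ℕ) (h : k ≤ n) :
    qp (p ^ (-(n : ℤ))) p k * (p ^ n) ^ k = zN p n k * zW p k := by
  induction k with
  | zero => simp [zN, zW, qp]
  | succ k ih =>
    have ih := ih (by omega)
    rw [qp_succ', zW_succ, zN, Finset.prod_range_succ, ← zN, pow_succ]
    obtain ⟨m, rfl⟩ := Nat.exists_eq_add_of_le (show k ≤ n by omega)
    rw [show k + m - k = m by omega]
    have : (1 - p ^ (-((k + m : ℕ) : ℤ)) * p ^ k) * p ^ (k + m) = (1 - p ^ m) * (-p ^ k) := by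
      rw [_root_.zpow_neg, zpow_natCast]
      field_simp
      ring
    linear_combination (1 - p ^ m) * (-p ^ k) * ih +
      qp (p ^ (-((k + m : ℕ) : ℤ))) p k * (p ^ (k + m)) ^ k * this

lemma qp_rev (p x : ℂ) (n k : ℕ) (h : k ≤ n) :
    qp (x * p ^ (n - k)) p k = ∏ j ∈ Finset.range k, (1 - x * p ^ (n - 1 - j)) := by
  rw [qp, ← Finset.prod_range_reflect]
  refine Finset.prod_congr rfl fun j hj => ?_
  have := Finset.mem_range.1 hj
  rw [mul_assoc, ← pow_add, show n - k + (k - 1 - j) = n - 1 - j by omega]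

lemma conn2 (p x : ℂ) (h0 : p ≠ 0) (hx : x ≠ 0) (n k : ℕ) (h : k ≤ n) :
    p ^ (2 * (k : ℤ) * ((n : ℤ) - 1) - (k : ℤ) * ((k : ℤ) - 1)) * p ^ k * x ^ k *
      qp (p ^ (1 - (n : ℤ)) / x) p k * qp (p ^ (-(n : ℤ))) p k =
    zN p n k * ∏ j ∈ Finset.range k, (1 - x * p ^ (n - 1 - j)) := by
  induction k with
  | zero => simp [zN, qp]
  | succ k ih =>
    have ih := ih (by omega)
    rw [qp_succ', qp_succ', zN, Finset.prod_range_succ, ← zN, Finset.prod_range_succ, pow_succ,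
      pow_succ]
    obtain ⟨m, rfl⟩ := Nat.exists_eq_add_of_le h
    rw [show k + 1 + m - k = m + 1 by omega, show k + 1 + m - 1 - k = m by omega]
    have hz : p ^ (2 * ((k + 1 : ℕ) : ℤ) * (((k + 1 + m : ℕ) : ℤ) - 1) -
          ((k + 1 : ℕ) : ℤ) * (((k + 1 : ℕ) : ℤ) - 1)) =
        p ^ (2 * (k : ℤ) * (((k + 1 + m : ℕ) : ℤ) - 1) - (k : ℤ) * ((k : ℤ) - 1)) *
          p ^ (2 * m) := by
      rw [← zpow_natCast p (2 * m), ← zpow_add₀ h0]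
      congr 1
      push_cast
      ring
    have h1 : p ^ (1 - ((k + 1 + m : ℕ) : ℤ)) = (p ^ (k + m))⁻¹ := by
      rw [← zpow_natCast, ← _root_.zpow_neg]
      congr 1
      push_cast
      ring
    have h2 : p ^ (-((k + 1 + m : ℕ) : ℤ)) = (p ^ (k + m + 1))⁻¹ := by
      rw [← zpow_natCast, ← _root_.zpow_neg]
      congr 1
      push_cast
      ring
    have key : p ^ (2 * m) * p * x * (1 - (p ^ (k + m))⁻¹ / x * p ^ k) *
        (1 - (p ^ (k + m + 1))⁻¹ * p ^ k) = (1 - p ^ (m + 1)) * (1 - x * p ^ m) := by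
      field_simp
      ring
    rw [hz]
    rw [h1, h2] at ih ⊢
    linear_combination (1 - p ^ (m + 1)) * (1 - x * p ^ m) * ih +
      (p ^ (2 * (k : ℤ) * (((k + 1 + m : ℕ) : ℤ) - 1) - (k : ℤ) * ((k : ℤ) - 1)) * p ^ k * x ^ k *
      qp ((p ^ (k + m))⁻¹ / x) p k * qp (p ^ (k + m + 1))⁻¹ p k) * key

/-- a q-analogue of Sheppard's transformation. -/
theorem stmt16 (q : ℝ) (hq0 : 0 < q) (hq1 : q < 1) (n : ℕ)
    (b c d e : ℂ) (hb : b ≠ 0) (hc : c ≠ 0) (hd : d ≠ 0) (he : e ≠ 0) :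
    ∑ k ∈ Finset.range (n + 1),
        qp (d * (q : ℂ) ^ k) (q : ℂ) (n - k) * qp (e * (q : ℂ) ^ k) (q : ℂ) (n - k) *
          (qp ((q : ℂ) ^ (-(n : ℤ))) (q : ℂ) k * qp b (q : ℂ) k * qp c (q : ℂ) k /
            qp (q : ℂ) (q : ℂ) k) *
          (d * e * (q : ℂ) ^ n / (b * c)) ^ k =
      c ^ n *
        ∑ k ∈ Finset.range (n + 1),
          (q : ℂ) ^ (2 * (k : ℤ) * ((n : ℤ) - 1) - (k : ℤ) * ((k : ℤ) - 1)) *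
            (d * e / (b * c ^ 2)) ^ k *
            qp (d / c) (q : ℂ) (n - k) * qp (e / c) (q : ℂ) (n - k) *
            (qp ((q : ℂ) ^ (-(n : ℤ))) (q : ℂ) k * qp c (q : ℂ) k *
                qp (b * c * (q : ℂ) ^ (1 - (n : ℤ)) / (d * e)) (q : ℂ) k /
              qp (q : ℂ) (q : ℂ) k) *
            (q : ℂ) ^ k := by
  have h0 : (q : ℂ) ≠ 0 := by exact_mod_cast hq0.ne'
  have hp : ∀ j : ℕ, 1 - (q : ℂ) ^ (j + 1) ≠ 0 := by
    intro j
    have : q ^ (j + 1) < 1 := pow_lt_one₀ hq0.le hq1 (by omega)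
    rw [sub_ne_zero]
    exact_mod_cast this.ne'
  generalize (q : ℂ) = p at h0 hp
  have hx : d * e / (b * c) ≠ 0 := by positivity
  have main := zL_eq_zR p hp n c d e (d * e / (b * c)) (d * e / c) (by field_simp)
  have hL : zL p n c d e (d * e / (b * c)) (d * e / c) = _ := main
  rw [zL, zR] at main
  rw [Finset.mul_sum]
  convert main using 1
  · refine Finset.sum_congr rfl fun k hk => ?_
    have hk := Nat.lt_succ_iff.1 (Finset.mem_range.1 hk)
    have h1 := conn1 p h0 n k hk
    have h2 := qpp_ne p hp k
    rw [show d * e / c = d * e / (b * c) * b by field_simp, zP_eq, zg,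
      show d * e * p ^ n / (b * c) = d * e / (b * c) * p ^ n by ring, mul_pow]
    generalize d * e / (b * c) = x at *
    rw [div_mul_eq_mul_div, ← h1]
    field_simp
  · refine Finset.sum_congr rfl fun k hk => ?_
    have hk := Nat.lt_succ_iff.1 (Finset.mem_range.1 hk)
    have h1 := conn2 p _ h0 hx n k hk
    rw [← qp_rev p _ n k hk] at h1
    have h2 := qpp_ne p hp k
    rw [zA_eq p c d e hc, zg]
    rw [show b * c * p ^ (1 - (n : ℤ)) / (d * e) = p ^ (1 - (n : ℤ)) / (d * e / (b * c)) by
        field_simp,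
      show d * e / (b * c ^ 2) = d * e / (b * c) / c by field_simp, div_pow]
    generalize d * e / (b * c) = x at *
    obtain ⟨m, rfl⟩ := Nat.exists_eq_add_of_le hk
    rw [show k + m - k = m by omega] at *
    rw [pow_add c]
    calc _ = c ^ m * (qp (d / c) p m * qp (e / c) p m) * qp c p k / qp p p k *
          (p ^ (2 * (k : ℤ) * (((k + m : ℕ) : ℤ) - 1) - (k : ℤ) * ((k : ℤ) - 1)) * p ^ k * x ^ k *
      qp (p ^ (1 - ((k + m : ℕ) : ℤ)) / x) p k * qp (p ^ (-((k + m : ℕ) : ℤ))) p k) := by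
          field_simp
      _ = _ := by rw [h1]; ring

end
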